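/- Fix an integer n ≥ 2, θ ∈ (0, π) and ε₁ > 0. There exists ε₂ > 0 depending only on ε₁, θ, n with the following property: for every n×n positive-definite Hermitian complex matrix χ₀, every n×n Hermitian matrix ω with ω ∈ Γ_{χ₀,θ}, and every Hermitian matrix χ with χ₀ ≤ χ ≤ (1 + ε₂)χ₀ (Loewner order), one has ω + 2ε₁χ ∈ Γ_{χ,θ}. -/

import Mathlib

open Real Matrix
open scoped ComplexOrder Classical

/-- The arccotangent with range `(0, π)`. -/
noncomputable def arccot (x : ℝ) : ℝ := π / 2 - Real.arctan x

open scoped MatrixOrder in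
/-- The eigenvalues of `ω` with respect to a positive-definite Hermitian `χ`: the (real)
eigenvalues of the Hermitian matrix `χ^{-1/2} * ω * χ^{-1/2}`, where `χ^{1/2}` is the
positive-definite square root of `χ` (junk value `0` if the side conditions fail). -/
noncomputable def eigsWrt {n : ℕ} (χ ω : Matrix (Fin n) (Fin n) ℂ) : Fin n → ℝ :=
  if hχ : χ.PosDef then
    if hM : (((CFC.sqrt χ)⁻¹ : Matrix (Fin n) (Fin n) ℂ) * ω
        * ((CFC.sqrt χ)⁻¹ : Matrix (Fin n) (Fin n) ℂ)).IsHermitian then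
      hM.eigenvalues
    else 0
  else 0

/-- `ω ∈ Γ_{χ,θ}` : the sum of `arccot` of any `n − 1` eigenvalues of `ω` with respect to `χ`
is less than `θ`. -/
def memGamma {n : ℕ} (χ ω : Matrix (Fin n) (Fin n) ℂ) (θ : ℝ) : Prop :=
  ∀ I : Finset (Fin n), I.card = n - 1 → ∑ i ∈ I, arccot (eigsWrt χ ω i) < θ

/-- `A ≤ B` in the Loewner order: `B − A` is positive semidefinite. -/
def loewnerLE {n : ℕ} (A B : Matrix (Fin n) (Fin n) ℂ) : Prop := (B - A).PosSemidef


/-- The common enumeration used by Mathlib for eigenvalues. -/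
noncomputable def rankEquiv (n : ℕ) : Fin n ≃ Fin (Fintype.card (Fin n)) :=
  (Fintype.equivOfCardEq (Fintype.card_fin _)).symm

lemma eigsWrt_anti {n : ℕ} (χ ω : Matrix (Fin n) (Fin n) ℂ) {i j : Fin n}
    (h : rankEquiv n i ≤ rankEquiv n j) : eigsWrt χ ω j ≤ eigsWrt χ ω i := by
  unfold eigsWrt
  split_ifs with h1 h2
  · exact h2.eigenvalues₀_antitone h
  · simp
  · simp

open scoped MatrixOrder in
lemma exists_diag {n : ℕ} {χ ω : Matrix (Fin n) (Fin n) ℂ} (hχ : χ.PosDef)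
    (hω : ω.IsHermitian) : ∃ P : Matrix (Fin n) (Fin n) ℂ,
      Pᴴ * χ * P = 1 ∧ Pᴴ * ω * P = diagonal (fun i => (eigsWrt χ ω i : ℂ)) := by
  have hn : (0 : Matrix (Fin n) (Fin n) ℂ) ≤ χ := hχ.posSemidef.nonneg
  have hS : (CFC.sqrt χ).IsHermitian := (CFC.sqrt_nonneg χ).posSemidef.isHermitian
  have hSS : CFC.sqrt χ * CFC.sqrt χ = χ := CFC.sqrt_mul_sqrt_self χ hn
  have hU : IsUnit (CFC.sqrt χ) := (CFC.isUnit_sqrt_iff χ hn).2 hχ.isUnit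
  have hD : IsUnit (CFC.sqrt χ).det := (Matrix.isUnit_iff_isUnit_det _).1 hU
  have hSi : ((CFC.sqrt χ)⁻¹)ᴴ = (CFC.sqrt χ)⁻¹ := hS.inv
  have hM : (((CFC.sqrt χ)⁻¹ : Matrix (Fin n) (Fin n) ℂ) * ω
        * ((CFC.sqrt χ)⁻¹ : Matrix (Fin n) (Fin n) ℂ)).IsHermitian := by
    have := Matrix.isHermitian_conjTranspose_mul_mul ((CFC.sqrt χ)⁻¹) hω
    rwa [hSi] at this
  have he : eigsWrt χ ω = hM.eigenvalues := by
    unfold eigsWrt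
    rw [dif_pos hχ, dif_pos hM]
  refine ⟨(CFC.sqrt χ)⁻¹ * (hM.eigenvectorUnitary : Matrix (Fin n) (Fin n) ℂ), ?_, ?_⟩
  · have h1 : (CFC.sqrt χ)⁻¹ * χ * (CFC.sqrt χ)⁻¹ = 1 := by
      calc (CFC.sqrt χ)⁻¹ * χ * (CFC.sqrt χ)⁻¹
          = (CFC.sqrt χ)⁻¹ * (CFC.sqrt χ * CFC.sqrt χ) * (CFC.sqrt χ)⁻¹ := by rw [hSS]
        _ = 1 := by
          rw [← mul_assoc, Matrix.nonsing_inv_mul _ hD, one_mul, Matrix.mul_nonsing_inv _ hD]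
    rw [conjTranspose_mul, hSi]
    have h2 : ((hM.eigenvectorUnitary : Matrix (Fin n) (Fin n) ℂ))ᴴ *
        (hM.eigenvectorUnitary : Matrix (Fin n) (Fin n) ℂ) = 1 :=
      Unitary.coe_star_mul_self hM.eigenvectorUnitary
    calc _ = (hM.eigenvectorUnitary : Matrix (Fin n) (Fin n) ℂ)ᴴ *
          ((CFC.sqrt χ)⁻¹ * χ * (CFC.sqrt χ)⁻¹) *
          (hM.eigenvectorUnitary : Matrix (Fin n) (Fin n) ℂ) := by simp only [mul_assoc]
      _ = 1 := by rw [h1, mul_one, h2]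
  · have h := hM.conjStarAlgAut_star_eigenvectorUnitary
    rw [Unitary.conjStarAlgAut_star_apply] at h
    rw [conjTranspose_mul, hSi, he]
    calc _ = (hM.eigenvectorUnitary : Matrix (Fin n) (Fin n) ℂ)ᴴ *
          ((CFC.sqrt χ)⁻¹ * ω * (CFC.sqrt χ)⁻¹) *
          (hM.eigenvectorUnitary : Matrix (Fin n) (Fin n) ℂ) := by simp only [mul_assoc]
      _ = _ := h

/-- Real part of the quadratic form. -/
noncomputable def qf {n : ℕ} (A : Matrix (Fin n) (Fin n) ℂ) (x : Fin n → ℂ) : ℝ :=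
  (star x ⬝ᵥ (A *ᵥ x)).re

lemma qf_diag {n : ℕ} {A P : Matrix (Fin n) (Fin n) ℂ} {d : Fin n → ℝ}
    (h : Pᴴ * A * P = diagonal (fun i => (d i : ℂ))) (c : Fin n → ℂ) :
    qf A (P *ᵥ c) = ∑ i, d i * Complex.normSq (c i) := by
  have : star (P *ᵥ c) ⬝ᵥ (A *ᵥ (P *ᵥ c)) = star c ⬝ᵥ ((Pᴴ * A * P) *ᵥ c) := by
    rw [star_mulVec, ← dotProduct_mulVec, mulVec_mulVec, mulVec_mulVec, mul_assoc]
  rw [qf, this, h, dotProduct, Complex.re_sum]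
  refine Finset.sum_congr rfl fun i _ => ?_
  simp [mulVec_diagonal, Complex.normSq_apply]
  ring

lemma exists_common {n : ℕ} (P Q : Matrix (Fin n) (Fin n) ℂ)
    (hP : Function.Injective P.mulVec) (hQ : Function.Injective Q.mulVec) (k : Fin n) :
    ∃ c d : Fin n → ℂ, c ≠ 0 ∧ P *ᵥ c = Q *ᵥ d ∧
      (∀ i, ¬ rankEquiv n k ≤ rankEquiv n i → c i = 0) ∧
      (∀ i, ¬ rankEquiv n i ≤ rankEquiv n k → d i = 0) := by
  set p : Fin n → Prop := fun i => rankEquiv n k ≤ rankEquiv n i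
  set q : Fin n → Prop := fun i => rankEquiv n i ≤ rankEquiv n k
  let E1 : ({i // p i} → ℂ) →ₗ[ℂ] (Fin n → ℂ) :=
    { toFun := fun c i => if h : p i then c ⟨i, h⟩ else 0
      map_add' := by intro a b; ext i; by_cases h : p i <;> simp [h]
      map_smul' := by intro a b; ext i; by_cases h : p i <;> simp [h] }
  let E2 : ({i // q i} → ℂ) →ₗ[ℂ] (Fin n → ℂ) :=
    { toFun := fun c i => if h : q i then c ⟨i, h⟩ else 0
      map_add' := by intro a b; ext i; by_cases h : q i <;> simp [h]
      map_smul' := by intro a b; ext i; by_cases h : q i <;> simp [h] }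
  let F : (({i // p i} → ℂ) × ({i // q i} → ℂ)) →ₗ[ℂ] (Fin n → ℂ) :=
    (P.mulVecLin ∘ₗ E1).coprod (-(Q.mulVecLin ∘ₗ E2))
  have hcard : Fintype.card (Fin n) < Fintype.card {i // p i} + Fintype.card {i // q i} := by
    rw [Fintype.card_subtype, Fintype.card_subtype, ← Finset.card_union_add_card_inter]
    have h1 : (Finset.univ.filter p ∪ Finset.univ.filter q) = Finset.univ := by
      ext i; simp [p, q, le_total]
    rw [h1, Finset.card_univ]
    exact Nat.lt_add_of_pos_right (Finset.card_pos.2 ⟨k, by simp [p, q]⟩)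
  have hker : LinearMap.ker F ≠ ⊥ := by
    apply LinearMap.ker_ne_bot_of_finrank_lt
    simpa using hcard
  obtain ⟨⟨a, b⟩, hab, hne⟩ := (Submodule.ne_bot_iff _).1 hker
  have hF : P *ᵥ (E1 a) = Q *ᵥ (E2 b) := by
    have : P *ᵥ (E1 a) + -(Q *ᵥ (E2 b)) = 0 := by simpa [F] using hab
    exact add_neg_eq_zero.1 this
  refine ⟨E1 a, E2 b, ?_, hF, ?_, ?_⟩
  · intro h0
    have h00 : E2 b = 0 := by
      apply hQ
      change Q *ᵥ (E2 b) = Q *ᵥ 0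
      rw [← hF, h0]; simp
    apply hne
    have ha : a = 0 := by
      ext ⟨i, hi⟩
      have := congrFun h0 i
      simpa [E1, hi] using this
    have hb : b = 0 := by
      ext ⟨i, hi⟩
      have := congrFun h00 i
      simpa [E2, hi] using this
    rw [ha, hb]; rfl
  · intro i hi
    have hi' : ¬ p i := hi
    simp [E1, hi']
  · intro i hi
    have hi' : ¬ q i := hi
    simp [E2, hi']

lemma inj_of_diag {n : ℕ} {χ P : Matrix (Fin n) (Fin n) ℂ} (h : Pᴴ * χ * P = 1) :
    Function.Injective P.mulVec := by
  intro x y hxy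
  have : (Pᴴ * χ) *ᵥ (P *ᵥ x) = (Pᴴ * χ) *ᵥ (P *ᵥ y) := congrArg _ hxy
  simpa [mulVec_mulVec, h] using this

/-- Comparison of generalized eigenvalues through quadratic forms. -/
lemma exists_vector {n : ℕ} {χ₀ ω χ ω' : Matrix (Fin n) (Fin n) ℂ} (h0 : χ₀.PosDef)
    (h1 : χ.PosDef) (hω : ω.IsHermitian) (hω' : ω'.IsHermitian) (k : Fin n) :
    ∃ x, 0 < qf χ x ∧ eigsWrt χ₀ ω k * qf χ₀ x ≤ qf ω x ∧
      qf ω' x ≤ eigsWrt χ ω' k * qf χ x := by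
  obtain ⟨P, hP1, hP2⟩ := exists_diag h1 hω'
  obtain ⟨Q, hQ1, hQ2⟩ := exists_diag h0 hω
  obtain ⟨c, d, hc, hcd, hcs, hds⟩ := exists_common P Q (inj_of_diag hP1) (inj_of_diag hQ1) k
  have hP1' : Pᴴ * χ * P = diagonal (fun i => (((fun _ => 1 : Fin n → ℝ) i : ℝ) : ℂ)) := by
    rw [hP1]; simp
  have hQ1' : Qᴴ * χ₀ * Q = diagonal (fun i => (((fun _ => 1 : Fin n → ℝ) i : ℝ) : ℂ)) := by
    rw [hQ1]; simp
  refine ⟨P *ᵥ c, ?_, ?_, ?_⟩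
  · rw [qf_diag hP1']
    obtain ⟨i, hi⟩ := Function.ne_iff.1 hc
    refine Finset.sum_pos' (fun i _ => by simpa using Complex.normSq_nonneg _)
      ⟨i, Finset.mem_univ _, by simpa using hi⟩
  · rw [hcd, qf_diag hQ1', qf_diag hQ2, Finset.mul_sum]
    refine Finset.sum_le_sum fun i _ => ?_
    by_cases h : rankEquiv n i ≤ rankEquiv n k
    · have := eigsWrt_anti χ₀ ω h
      have h3 := Complex.normSq_nonneg (d i)
      rw [one_mul]
      gcongr
    · simp [hds i h]
  · rw [qf_diag hP1', qf_diag hP2, Finset.mul_sum]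
    refine Finset.sum_le_sum fun i _ => ?_
    by_cases h : rankEquiv n k ≤ rankEquiv n i
    · have := eigsWrt_anti χ ω' h
      have h3 := Complex.normSq_nonneg (c i)
      rw [one_mul]
      gcongr
    · simp [hcs i h]

lemma qf_add {n : ℕ} (A B : Matrix (Fin n) (Fin n) ℂ) (x : Fin n → ℂ) :
    qf (A + B) x = qf A x + qf B x := by
  simp [qf, add_mulVec, dotProduct_add]

lemma qf_sub {n : ℕ} (A B : Matrix (Fin n) (Fin n) ℂ) (x : Fin n → ℂ) :
    qf (A - B) x = qf A x - qf B x := by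
  simp [qf, sub_mulVec, dotProduct_sub]

lemma qf_smul {n : ℕ} (r : ℝ) (A : Matrix (Fin n) (Fin n) ℂ) (x : Fin n → ℂ) :
    qf (r • A) x = r * qf A x := by
  simp [qf, smul_mulVec, dotProduct_smul]

lemma qf_le {n : ℕ} {A B : Matrix (Fin n) (Fin n) ℂ} (h : loewnerLE A B) (x : Fin n → ℂ) :
    qf A x ≤ qf B x := by
  have h1 := (Complex.le_def.1 (PosSemidef.dotProduct_mulVec_nonneg h x)).1
  have h2 : 0 ≤ qf (B - A) x := by simpa [qf] using h1
  rw [qf_sub] at h2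
  linarith

lemma eig_bound {n : ℕ} {χ₀ ω χ : Matrix (Fin n) (Fin n) ℂ} {ε ε₁ : ℝ} (hε : 0 < ε)
    (h0 : χ₀.PosDef) (hω : ω.IsHermitian) (hχ : χ.IsHermitian)
    (h1 : loewnerLE χ₀ χ) (h2 : loewnerLE χ ((1 + ε : ℝ) • χ₀)) (k : Fin n) :
    min (eigsWrt χ₀ ω k) (eigsWrt χ₀ ω k / (1 + ε)) + 2 * ε₁ ≤
      eigsWrt χ (ω + (2 * ε₁ : ℝ) • χ) k := by
  have hpd : χ.PosDef := by
    have := h0.add_posSemidef h1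
    simpa using this
  have hω' : (ω + (2 * ε₁ : ℝ) • χ).IsHermitian :=
    hω.add (hχ.smul (k := (2 * ε₁ : ℝ)) (IsSelfAdjoint.all _))
  obtain ⟨x, hx, ha, hb⟩ := exists_vector h0 hpd hω hω' k
  have h3 := qf_le h1 x
  have h4 := qf_le h2 x
  rw [qf_smul] at h4
  rw [qf_add, qf_smul] at hb
  set l := eigsWrt χ₀ ω k
  set m := eigsWrt χ (ω + (2 * ε₁ : ℝ) • χ) k
  have key : min l (l / (1 + ε)) * qf χ x ≤ l * qf χ₀ x := by
    rcases le_total 0 l with hl | hl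
    · calc _ ≤ l / (1 + ε) * qf χ x := by gcongr; exact min_le_right _ _
        _ ≤ l / (1 + ε) * ((1 + ε) * qf χ₀ x) := by gcongr
        _ = _ := by field_simp
    · calc _ ≤ l * qf χ x := by gcongr; exact min_le_left _ _
        _ ≤ _ := mul_le_mul_of_nonpos_left h3 hl
  refine le_of_mul_le_mul_right ?_ hx
  linarith

lemma arctan_le_self' {x : ℝ} (hx : 0 ≤ x) : arctan x ≤ x := by
  rcases hx.eq_or_lt with rfl | h
  · simp
  · have := Real.lt_tan (arctan_pos.2 h) (arctan_lt_pi_div_two x)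
    rw [tan_arctan] at this
    exact this.le

lemma arccot_anti {x y : ℝ} (h : x ≤ y) : arccot y ≤ arccot x := by
  unfold arccot
  have := arctan_strictMono.monotone h
  linarith

lemma arccot_pos (x : ℝ) : 0 < arccot x := by
  unfold arccot
  have := arctan_lt_pi_div_two x
  linarith

lemma arccot_loss {l ε : ℝ} (hε : 0 < ε) :
    arccot (min l (l / (1 + ε))) ≤ arccot l + ε := by
  have h1 : 0 < 1 + ε := by linarith
  rcases le_total l 0 with hl | hl
  · have : l ≤ l / (1 + ε) := by
      rw [le_div_iff₀ h1]; nlinarith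
    rw [min_eq_left this]; linarith
  · have : l / (1 + ε) ≤ l := by
      rw [div_le_iff₀ h1]; nlinarith
    rw [min_eq_right this]
    set b := l / (1 + ε) with hb
    have hb0 : 0 ≤ b := by positivity
    have hl' : l = (1 + ε) * b := by rw [hb]; field_simp
    have h2 : l * (-b) < 1 := by nlinarith
    have h3 := arctan_add h2
    rw [arctan_neg] at h3
    have h4 : (l + -b) / (1 - l * -b) = ε * b / (1 + (1 + ε) * b ^ 2) := by
      rw [hl']; congr 1 <;> ring
    have h5 : ε * b / (1 + (1 + ε) * b ^ 2) ≤ ε := by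
      rw [div_le_iff₀ (by positivity)]
      have : b ≤ 1 + (1 + ε) * b ^ 2 := by nlinarith [sq_nonneg (b - 1), mul_nonneg hε.le (sq_nonneg b)]
      gcongr
    have h6 := arctan_le_self' (x := ε * b / (1 + (1 + ε) * b ^ 2)) (by positivity)
    rw [h4] at h3
    unfold arccot
    linarith

theorem perturb_cone (n : ℕ) (hn : 2 ≤ n) (θ : ℝ) (hθ : θ ∈ Set.Ioo 0 π)
    (ε₁ : ℝ) (hε₁ : 0 < ε₁) :
    ∃ ε₂ > 0, ∀ χ₀ ω χ : Matrix (Fin n) (Fin n) ℂ,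
      χ₀.PosDef → ω.IsHermitian → χ.IsHermitian →
      loewnerLE χ₀ χ → loewnerLE χ ((1 + ε₂ : ℝ) • χ₀) →
      memGamma χ₀ ω θ →
      memGamma χ (ω + (2 * ε₁ : ℝ) • χ) θ := by
  obtain ⟨hθ0, hθ1⟩ := hθ
  have hn0 : (0 : ℝ) < n := by exact_mod_cast (by omega : 0 < n)
  -- the threshold `K`
  obtain ⟨K, hK0, hK⟩ : ∃ K : ℝ, 0 < K ∧ n * arccot (K / 2) < θ := by
    have ht : Filter.Tendsto (fun K : ℝ => n * arccot (K / 2)) Filter.atTop (nhds (n * (π / 2 - π / 2))) := by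
      unfold arccot
      refine Filter.Tendsto.const_mul _ (Filter.Tendsto.const_sub _ ?_)
      exact (tendsto_arctan_atTop.mono_right nhdsWithin_le_nhds).comp
        (Filter.tendsto_id.atTop_div_const (by norm_num))
    rw [sub_self, mul_zero] at ht
    obtain ⟨K, h1, h2⟩ := ((Filter.eventually_gt_atTop 0).and (ht.eventually_lt_const hθ0)).exists
    exact ⟨K, h1, h2⟩
  -- the gain
  obtain ⟨c, hc0, hc⟩ : ∃ c > 0, ∀ l ∈ Set.Icc (tan (π / 2 - θ)) K, arccot (l + ε₁) + c ≤ arccot l := by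
    rcases (Set.Icc (tan (π / 2 - θ)) K).eq_empty_or_nonempty with he | hne
    · exact ⟨1, one_pos, by simp [he]⟩
    · have hcont : ContinuousOn (fun l => arccot l - arccot (l + ε₁)) (Set.Icc (tan (π / 2 - θ)) K) := by
        unfold arccot
        apply Continuous.continuousOn
        fun_prop
      obtain ⟨l0, _, hl0⟩ := isCompact_Icc.exists_isMinOn hne hcont
      refine ⟨arccot l0 - arccot (l0 + ε₁), ?_, ?_⟩
      · have : arctan l0 < arctan (l0 + ε₁) := arctan_strictMono (by linarith)
        unfold arccot
        linarith
      · intro l hl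
        have := hl0 hl
        simp only [Set.mem_ofPred_eq] at this
        linarith
  set ε := min 1 (min (ε₁ / K) (c / (2 * n))) with hεdef
  have hε : 0 < ε := by positivity
  have hε1 : ε ≤ 1 := min_le_left _ _
  have hεK : ε * K ≤ ε₁ := by
    rw [← le_div_iff₀ hK0]; exact (min_le_right _ _).trans (min_le_left _ _)
  have hεc : n * ε < c := by
    have : ε ≤ c / (2 * n) := (min_le_right _ _).trans (min_le_right _ _)
    rw [le_div_iff₀ (by positivity)] at this
    linarith
  refine ⟨ε, hε, fun χ₀ ω χ h0 hω hχ h1 h2 hG I hI => ?_⟩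
  set l := eigsWrt χ₀ ω with hl
  have hb : ∀ k, min (l k) (l k / (1 + ε)) + 2 * ε₁ ≤ eigsWrt χ (ω + (2 * ε₁ : ℝ) • χ) k :=
    fun k => eig_bound hε h0 hω hχ h1 h2 k
  have hIn : (I.card : ℝ) ≤ n := by exact_mod_cast (by omega : I.card ≤ n)
  have hloss : ∀ k, arccot (eigsWrt χ (ω + (2 * ε₁ : ℝ) • χ) k) ≤ arccot (l k) + ε := fun k =>
    (arccot_anti (by linarith [hb k])).trans (arccot_loss hε)
  have hsum := hG I hI
  by_cases hA : ∀ i ∈ I, K ≤ l i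
  · refine lt_of_le_of_lt ?_ hK
    calc _ ≤ ∑ i ∈ I, arccot (K / 2) := by
          refine Finset.sum_le_sum fun i hi => arccot_anti ?_
          have h3 := hA i hi
          have h4 : K / 2 ≤ l i / (1 + ε) := by
            rw [div_le_div_iff₀ (by norm_num) (by linarith)]; nlinarith
          have h5 : K / 2 ≤ l i := by linarith
          linarith [hb i, le_min h5 h4]
      _ = I.card * arccot (K / 2) := by simp
      _ ≤ _ := by
          have := arccot_pos (K / 2)
          gcongr
  · push Not at hA
    obtain ⟨i, hi, hiK⟩ := hA
    have hli : tan (π / 2 - θ) ≤ l i := by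
      have h3 : arccot (l i) < θ := lt_of_le_of_lt
        (Finset.single_le_sum (f := fun i => arccot (l i)) (fun j _ => (arccot_pos _).le) hi) hsum
      have h4 : π / 2 - θ < arctan (l i) := by unfold arccot at h3; linarith
      have h5 := tan_lt_tan_of_lt_of_lt_pi_div_two (by linarith) (arctan_lt_pi_div_two (l i)) h4
      rw [tan_arctan] at h5
      exact h5.le
    have hgain : arccot (eigsWrt χ (ω + (2 * ε₁ : ℝ) • χ) i) + c ≤ arccot (l i) := by
      refine le_trans ?_ (hc (l i) ⟨hli, hiK.le⟩)
      gcongr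
      apply arccot_anti
      have h6 : l i - ε₁ ≤ l i / (1 + ε) := by
        rw [le_div_iff₀ (by linarith)]; nlinarith
      have h7 : l i - ε₁ ≤ l i := by linarith
      linarith [hb i, le_min h7 h6]
    rw [← Finset.add_sum_erase _ _ hi] at hsum ⊢
    have hrest : ∑ x ∈ I.erase i, arccot (eigsWrt χ (ω + (2 * ε₁ : ℝ) • χ) x) ≤
        ∑ x ∈ I.erase i, arccot (l x) + n * ε := by
      calc _ ≤ ∑ x ∈ I.erase i, (arccot (l x) + ε) := Finset.sum_le_sum fun k _ => hloss k
        _ = ∑ x ∈ I.erase i, arccot (l x) + (I.erase i).card * ε := by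
            rw [Finset.sum_add_distrib]; simp
        _ ≤ _ := by
            have : ((I.erase i).card : ℝ) ≤ n := by
              have := Finset.card_erase_le (s := I) (a := i)
              exact_mod_cast (by omega : (I.erase i).card ≤ n)
            gcongr
    linarith
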